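/- For every n ≥ 1, the maximum of the total size ∑_{r ∈ (ℤ/2ℤ)^n} |A(r)| over all families of subsets A(r) ⊆ (ℤ/3ℤ)^n indexed by r ∈ (ℤ/2ℤ)^n satisfying property (*)_4 equals r_4(ℤ_6^n). -/

import Mathlib

/-- `A` contains a `k`-term arithmetic progression `a, a+d, …, a+(k-1)d`
whose terms are pairwise distinct. -/
def IsDistinctAP {G : Type*} [AddCommGroup G] (k : ℕ) (A : Set G) : Prop :=
  ∃ a d : G, (∀ i : Fin k, a + (i : ℕ) • d ∈ A) ∧
    Function.Injective fun i : Fin k => a + (i : ℕ) • d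

/-- `rAP k m n` is the largest cardinality of a subset of `(ℤ/mℤ)^n` containing
no `k`-term arithmetic progression of pairwise distinct elements. -/
noncomputable def rAP (k m n : ℕ) : ℕ :=
  sSup {s : ℕ | ∃ A : Finset (Fin n → ZMod m),
    ¬ IsDistinctAP k (A : Set (Fin n → ZMod m)) ∧ A.card = s}

/-!
By the Chinese remainder theorem `(ℤ/6ℤ)^n` is `H × K` with `H = (ℤ/2ℤ)^n` and `K = (ℤ/3ℤ)^n`, so
its subsets are the families of subsets of `K` indexed by `H`. A progression of length four in
`H × K` with difference `(s, y)` is `(r, x), (r + s, x + y), (r, x + 2y), (r + s, x)`, and its terms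
are distinct exactly when `s ≠ 0` and `y ≠ 0`. The elements of `K` occurring in it form the
progression `x, x + 2y, x + y`, with `x, x + 2y` over `r` and `x, x + y` over `r + s`: this is
the configuration excluded by `(*)₄`.
-/

open Function Finset

section ArithmeticProgression

variable {G G' : Type*} [AddCommGroup G] [AddCommGroup G'] {k : ℕ}

theorem injective_add_nsmul_iff {a d : G} :
    Injective (fun i : Fin k => a + (i : ℕ) • d) ↔ ∀ j, 0 < j → j < k → j • d ≠ 0 := by
  constructor
  · intro hinj j hj hjk hjd
    have : (⟨j, hjk⟩ : Fin k) = ⟨0, hj.trans hjk⟩ := hinj (by simp [hjd])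
    exact hj.ne' (congrArg Fin.val this)
  · intro hd
    refine Injective.of_lt_imp_ne fun i j hij heq => ?_
    refine hd (j - i) (Nat.sub_pos_of_lt hij) ((Nat.sub_le _ _).trans_lt j.isLt) ?_
    rw [sub_nsmul d (Fin.le_def.1 hij.le), ← add_left_cancel heq, add_neg_cancel]

theorem not_isDistinctAP_empty (hk : 0 < k) : ¬ IsDistinctAP k (∅ : Set G) :=
  fun ⟨_, _, hmem, _⟩ => hmem ⟨0, hk⟩

theorem IsDistinctAP.image {S : Set G} (hS : IsDistinctAP k S) {f : G →+ G'}
    (hf : Injective f) : IsDistinctAP k (f '' S) := by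
  obtain ⟨a, d, hmem, hinj⟩ := hS
  have hterm (i : ℕ) : f (a + i • d) = f a + i • f d := by rw [map_add, map_nsmul]
  refine ⟨f a, f d, fun i => ⟨_, hmem i, hterm i⟩, ?_⟩
  simpa only [← hterm] using! hf.comp hinj

theorem isDistinctAP_image_addEquiv_iff (e : G ≃+ G') {S : Set G} :
    IsDistinctAP k (e '' S) ↔ IsDistinctAP k S := by
  refine ⟨fun h => ?_, fun h => h.image (f := (e : G →+ G')) e.injective⟩
  simpa [Set.image_image] using h.image (f := (e.symm : G' →+ G)) e.symm.injective

theorem isDistinctAP_four_iff {S : Set G} :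
    IsDistinctAP 4 S ↔ ∃ a d : G, 2 • d ≠ 0 ∧ 3 • d ≠ 0 ∧
      a ∈ S ∧ a + d ∈ S ∧ a + 2 • d ∈ S ∧ a + 3 • d ∈ S := by
  have hdiff (d : G) : (∀ j, 0 < j → j < 4 → j • d ≠ 0) ↔ 2 • d ≠ 0 ∧ 3 • d ≠ 0 := by
    refine ⟨fun h => ⟨h 2 (by simp) (by simp), h 3 (by simp) (by simp)⟩, ?_⟩
    rintro ⟨h2, h3⟩ j hj hj4 hjd
    interval_cases j
    · exact h2 (by rw [two_nsmul, ← one_nsmul d, hjd, add_zero])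
    · exact h2 hjd
    · exact h3 hjd
  simp only [IsDistinctAP, injective_add_nsmul_iff, hdiff, Fin.forall_fin_succ]
  simp [and_comm, and_left_comm, and_assoc]

theorem isGreatest_sSup_card_not_isDistinctAP [Finite G] (hk : 0 < k) :
    IsGreatest {s : ℕ | ∃ A : Finset G, ¬ IsDistinctAP k (A : Set G) ∧ #A = s}
      (sSup {s : ℕ | ∃ A : Finset G, ¬ IsDistinctAP k (A : Set G) ∧ #A = s}) := by
  have := Fintype.ofFinite G
  have hbdd : BddAbove {s : ℕ | ∃ A : Finset G, ¬ IsDistinctAP k (A : Set G) ∧ #A = s} :=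
    ⟨Fintype.card G, by rintro _ ⟨A, -, rfl⟩; exact card_le_univ A⟩
  have hempty : ¬ IsDistinctAP k ((∅ : Finset G) : Set G) := by
    simpa using not_isDistinctAP_empty hk
  exact ⟨Nat.sSup_mem ⟨0, ∅, hempty, card_empty⟩ hbdd, fun _ hs => le_csSup hbdd hs⟩

end ArithmeticProgression

section Product

variable {H K : Type*} [AddCommGroup H] [AddCommGroup K] [Module (ZMod 2) H] [Module (ZMod 3) K]

theorem isDistinctAP_four_prod_iff {S : Set (H × K)} :
    IsDistinctAP 4 S ↔ ∃ (r : H) (x : K) (s : H) (y : K), y ≠ 0 ∧ s ≠ 0 ∧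
      (r, x) ∈ S ∧ (r + s, x + y) ∈ S ∧ (r, x + 2 • y) ∈ S ∧ (r + s, x) ∈ S := by
  have two_nsmul_eq_zero (s : H) : 2 • s = 0 := ZModModule.char_nsmul_eq_zero 2 s
  have three_nsmul_eq_self (s : H) : 3 • s = s := by
    rw [succ_nsmul, two_nsmul_eq_zero, zero_add]
  have three_nsmul_eq_zero (y : K) : 3 • y = 0 := ZModModule.char_nsmul_eq_zero 3 y
  have two_nsmul_eq_zero_iff (y : K) : 2 • y = 0 ↔ y = 0 := by
    refine ⟨fun h => ?_, fun h => by rw [h, nsmul_zero]⟩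
    rw [← three_nsmul_eq_zero y, succ_nsmul, h, zero_add]
  simp only [isDistinctAP_four_iff, Prod.exists, ne_eq, Prod.smul_mk, Prod.mk_add_mk,
    Prod.mk_eq_zero, two_nsmul_eq_zero, three_nsmul_eq_self, three_nsmul_eq_zero,
    two_nsmul_eq_zero_iff, true_and, and_true, add_zero]

theorem distinct_add_eq_add_self_iff {a b c : K} :
    (a + c = b + b ∧ a ≠ b ∧ a ≠ c ∧ b ≠ c) ↔ ∃ y ≠ 0, b = a + 2 • y ∧ c = a + y := by
  have three_nsmul_eq_zero (y : K) : 3 • y = 0 := ZModModule.char_nsmul_eq_zero 3 y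
  constructor
  · rintro ⟨hmid, -, hac, -⟩
    refine ⟨c - a, sub_ne_zero.2 hac.symm, ?_, by abel⟩
    calc b = 3 • b - (b + b) := by abel
      _ = 3 • c - (a + c) := by rw [three_nsmul_eq_zero, three_nsmul_eq_zero, hmid]
      _ = a + 2 • (c - a) := by abel
  · rintro ⟨y, hy, rfl, rfl⟩
    have hy3 : y + 2 • y = 0 := by rw [← three_nsmul_eq_zero y]; abel
    have hy2 : 2 • y ≠ 0 := fun h => hy (by rwa [h, add_zero] at hy3)
    refine ⟨?_, by simpa using hy2, by simpa using hy, by simpa [two_nsmul] using hy⟩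
    calc a + (a + y) = a + (a + y) + 3 • y := by rw [three_nsmul_eq_zero, add_zero]
      _ = a + 2 • y + (a + 2 • y) := by abel

end Product

section Families

variable {H K : Type*}

/-- Property `(*)₄` of a family of finite sets: no two distinct members `A r'` and `A r''` contain
`{a, b}` and `{a, c}` respectively, for a progression `a, b, c` of distinct elements. The
progression is encoded by its midpoint equation `a + c = b + b`. -/
def PropertyStarFour [Add K] (A : H → Finset K) : Prop :=
  ¬ ∃ (r' r'' : H) (a b c : K), r' ≠ r'' ∧
    a + c = b + b ∧ a ≠ b ∧ a ≠ c ∧ b ≠ c ∧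
    a ∈ A r' ∧ b ∈ A r' ∧ a ∈ A r'' ∧ c ∈ A r''

/-- The correspondence between families of finite subsets of `K` indexed by `H` and finite subsets
of `H × K`: the subset corresponding to `A` has fibre `A r` over `r`. -/
noncomputable def fiberFamilyEquiv [Fintype H] : (H → Finset K) ≃ Finset (H × K) where
  toFun A := (univ.sigma A).map (Equiv.sigmaEquivProd H K).toEmbedding
  invFun S r := S.preimage (Prod.mk r) (Prod.mk_right_injective r).injOn
  left_inv A := by ext; simp
  right_inv S := by ext; simp

variable [Fintype H]

@[simp]
theorem mem_fiberFamilyEquiv {A : H → Finset K} {p : H × K} :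
    p ∈ fiberFamilyEquiv A ↔ p.2 ∈ A p.1 := by
  simp [fiberFamilyEquiv]

theorem card_fiberFamilyEquiv (A : H → Finset K) : #(fiberFamilyEquiv A) = ∑ r, #(A r) := by
  simp [fiberFamilyEquiv]

theorem propertyStarFour_iff_not_isDistinctAP [AddCommGroup H] [AddCommGroup K]
    [Module (ZMod 2) H] [Module (ZMod 3) K] {A : H → Finset K} :
    PropertyStarFour A ↔ ¬ IsDistinctAP 4 (fiberFamilyEquiv A : Set (H × K)) := by
  rw [PropertyStarFour, isDistinctAP_four_prod_iff, not_iff_not]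
  simp only [mem_coe, mem_fiberFamilyEquiv]
  constructor
  · rintro ⟨r', r'', a, b, c, hr, hmid, hab, hac, hbc, ha', hb', ha'', hc''⟩
    obtain ⟨y, hy, rfl, rfl⟩ := distinct_add_eq_add_self_iff.1 ⟨hmid, hab, hac, hbc⟩
    refine ⟨r', a, r'' - r', y, hy, sub_ne_zero.2 hr.symm, ha', ?_, hb', ?_⟩ <;>
      rwa [add_sub_cancel]
  · rintro ⟨r, x, s, y, hy, hs, h0, h1, h2, h3⟩
    obtain ⟨hmid, hab, hac, hbc⟩ := distinct_add_eq_add_self_iff.2 ⟨y, hy, rfl, rfl⟩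
    exact ⟨r, r + s, x, x + 2 • y, x + y, by simpa using hs, hmid, hab, hac, hbc, h0, h2, h3, h1⟩

end Families

/-- The Chinese remainder isomorphism `(ℤ/mnℤ)^ι ≃ (ℤ/mℤ)^ι × (ℤ/nℤ)^ι` for coprime `m` and `n`,
applied in each coordinate. -/
def piChineseRemainder (ι : Type*) {m n : ℕ} (h : m.Coprime n) :
    (ι → ZMod (m * n)) ≃+ (ι → ZMod m) × (ι → ZMod n) where
  toEquiv := ((Equiv.refl ι).arrowCongr (ZMod.chineseRemainder h).toEquiv).trans
    (Equiv.arrowProdEquivProdArrow ι _ _)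
  map_add' f g := by ext <;> simp

theorem subset_reformulation_star4_general {G H K : Type*} [AddCommGroup G] [AddCommGroup H]
    [AddCommGroup K] [Module (ZMod 2) H] [Module (ZMod 3) K] [Fintype H] [Finite K]
    (e : G ≃+ H × K) :
    IsGreatest {S : ℕ | ∃ A : H → Finset K, PropertyStarFour A ∧ S = ∑ r, #(A r)}
      (sSup {s : ℕ | ∃ A : Finset G, ¬ IsDistinctAP 4 (A : Set G) ∧ #A = s}) := by
  have : Finite G := Finite.of_equiv _ e.symm.toEquiv
  convert isGreatest_sSup_card_not_isDistinctAP (G := G) (k := 4) (by norm_num) using 1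
  ext S
  refine (fiberFamilyEquiv.trans e.symm.toEquiv.finsetCongr).exists_congr fun A => ?_
  have hAP := isDistinctAP_image_addEquiv_iff (k := 4) e.symm (S := fiberFamilyEquiv A)
  have hcard := card_fiberFamilyEquiv A
  simp [propertyStarFour_iff_not_isDistinctAP, ← hAP, ← hcard, eq_comm]

theorem subset_reformulation_star4 (n : ℕ) (hn : 1 ≤ n) :
    IsGreatest {S : ℕ | ∃ A : (Fin n → ZMod 2) → Finset (Fin n → ZMod 3),
      (¬ ∃ (r' r'' : Fin n → ZMod 2) (a b c : Fin n → ZMod 3), r' ≠ r'' ∧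
        a + c = b + b ∧ a ≠ b ∧ a ≠ c ∧ b ≠ c ∧
        a ∈ A r' ∧ b ∈ A r' ∧ a ∈ A r'' ∧ c ∈ A r'') ∧
      S = ∑ r : Fin n → ZMod 2, (A r).card}
    (rAP 4 6 n) :=
  subset_reformulation_star4_general (piChineseRemainder (Fin n) (by norm_num : Nat.Coprime 2 3))
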